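/- For every natural number n, the group homology H_n(C₂ × C₂; F₂) of the Klein four-group with trivial coefficients F₂ is an F₂-vector space of dimension n + 1. -/

import Mathlib

open TensorProduct MulOpposite CategoryTheory

section Machinery

variable (k : Type) [CommRing k] (S : Type) [Ring S] [Algebra k S] (P : Set (S × S))

/-- The `k`-submodule of (the restriction of scalars of) an `S`-module `N` generated by all
differences `p.1 • n - p.2 • n` for pairs `p ∈ P` and `n ∈ N`. -/
noncomputable def relSub (N : ModuleCat S) :
    Submodule k ((ModuleCat.restrictScalars (algebraMap k S)).obj N) :=
  Submodule.span k {x | ∃ p ∈ P, ∃ n : N, x = p.1 • n - p.2 • n}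

/-- The "coinvariants"-type additive functor sending an `S`-module `N` to its quotient,
as a `k`-module, by the span of all elements `p.1 • n - p.2 • n` for `p ∈ P`, `n ∈ N`. -/
noncomputable def coinvFunctor : ModuleCat S ⥤ ModuleCat k where
  obj N := ModuleCat.of k (((ModuleCat.restrictScalars (algebraMap k S)).obj N) ⧸ relSub k S P N)
  map {N N'} f := ModuleCat.ofHom <| Submodule.mapQ (relSub k S P N) (relSub k S P N')
      ((ModuleCat.restrictScalars (algebraMap k S)).map f).hom (by
    rw [relSub, Submodule.span_le]
    rintro x ⟨p, hp, n, rfl⟩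
    have : ((ModuleCat.restrictScalars (algebraMap k S)).map f) (p.1 • n - p.2 • n)
        = p.1 • (f n) - p.2 • (f n) := by
      show f (p.1 • n - p.2 • n) = _
      rw [map_sub, f.hom.map_smul, f.hom.map_smul]
    refine (congrArg (· ∈ relSub k S P N') this).mpr ?_
    exact Submodule.subset_span ⟨p, hp, f n, rfl⟩)
  map_id _ := ModuleCat.hom_ext (Submodule.linearMap_qext _ (LinearMap.ext fun _ => rfl))
  map_comp _ _ := ModuleCat.hom_ext (Submodule.linearMap_qext _ (LinearMap.ext fun _ => rfl))

instance : (coinvFunctor k S P).Additive where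
  map_add := ModuleCat.hom_ext (Submodule.linearMap_qext _ (LinearMap.ext fun _ => rfl))

end Machinery

/-- Group homology `H_n(G; k)` with trivial coefficients `k`: the `n`-th left derived functor
(that is, `Tor_n` over the group algebra `MonoidAlgebra k G`) of the coinvariants functor
`N ↦ N / span { g•n - n }`, evaluated at the trivial one-dimensional representation `k`
(made a `MonoidAlgebra k G`-module via the augmentation map). -/
noncomputable def GroupHomology (k : Type) [CommRing k] (G : Type) [Group G] (n : ℕ) :
    ModuleCat k :=
  letI : Module (MonoidAlgebra k G) k :=
    Module.compHom k (MonoidAlgebra.lift k k G 1).toRingHom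
  ((coinvFunctor k (MonoidAlgebra k G)
      {p | ∃ g : G, p = (MonoidAlgebra.single g 1, 1)}).leftDerived n).obj
    (ModuleCat.of (MonoidAlgebra k G) k)

/-!
Write `x = s - 1` and `y = t - 1` for generators `s`, `t` of a Klein four-group `G`. In
characteristic two, `k[G]` is `k[x, y] / (x ^ 2, y ^ 2)`, over which the total complex of the double
complex with `k[G]` in every bidegree `(p, q)`, horizontal maps `x` and vertical maps `± y`, is a
free resolution of `k`, of rank `n + 1` in degree `n`. Its differentials have entries in the
augmentation ideal, so they vanish on coinvariants, and the homology in degree `n` is `k ^ (n + 1)`.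
-/

open scoped MonoidAlgebra
open MonoidAlgebra (single single_mul_single)

universe u

section Resolution

variable {C : Type*} [Category* C] [Abelian C]

lemma quasiIso_toSingle₀Equiv_symm (K : ChainComplex C ℕ) {X : C} (ε : K.X 0 ⟶ X) [Epi ε]
    (w : K.d 1 0 ≫ ε = 0) (h₀ : (ShortComplex.mk _ _ w).Exact) (h : ∀ n, K.ExactAt (n + 1)) :
    QuasiIso ((K.toSingle₀Equiv X).symm ⟨ε, w⟩) where
  quasiIsoAt n := by
    cases n with
    | zero =>
      rw [ChainComplex.quasiIsoAt₀_iff,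
        ShortComplex.quasiIso_iff_of_zeros' _ (K.shape _ _ (by simp)) rfl rfl]
      simpa [ChainComplex.toSingle₀Equiv] using! And.intro h₀ ‹Epi ε›
    | succ n =>
      rw [quasiIsoAt_iff_exactAt' (hL := ChainComplex.exactAt_succ_single_obj ..)]
      exact h n

variable {D : Type*} [Category* D] [Abelian D] [HasProjectiveResolutions C]

/-- The left derived functors of `F` read off from a projective resolution whose differentials are
annihilated by `F`. -/
noncomputable def leftDerivedObjIsoOfMapDEqZero {X : C} (P : ProjectiveResolution X) (F : C ⥤ D)
    [F.Additive] (h : ∀ i j, F.map (P.complex.d i j) = 0) (n : ℕ) :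
    (F.leftDerived n).obj X ≅ F.obj (P.complex.X n) :=
  P.isoLeftDerivedObj F n ≪≫
    (ShortComplex.HomologyData.ofZeros
      (((F.mapHomologicalComplex _).obj P.complex).sc n) (h _ _) (h _ _)).left.homologyIso

end Resolution

section ExactPair

variable {R : Type u} [CommRing R]

/-- A pair of square-zero elements `x`, `y` such that `x` generates its own annihilator and `y`
generates its own annihilator modulo `x`. Given the former, the latter is equivalent to the
annihilator of `x * y` being contained in `(x, y)`, which is how it is encoded. -/
structure IsExactSquareZeroPair (x y : R) : Prop where
  left_mul_self : x * x = 0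
  right_mul_self : y * y = 0
  dvd_of_mul_eq_zero {r : R} : x * r = 0 → x ∣ r
  mem_span_of_mul_eq_zero {r : R} : x * y * r = 0 → r ∈ Ideal.span {x, y}

namespace IsExactSquareZeroPair

variable (x y : R)

/-- The differential, in degree `n + 1`, of the total complex of the first-quadrant double complex
with `R` in every bidegree, horizontal maps `x` and vertical maps `± y`. The coordinate `i` in
degree `n` is the summand of horizontal degree `i` and vertical degree `n - i`. -/
def differential (n : ℕ) : (Fin (n + 2) → R) →ₗ[R] (Fin (n + 1) → R) :=
  LinearMap.pi fun i =>
    x • LinearMap.proj i.succ + ((-1) ^ (i : ℕ) * y) • LinearMap.proj i.castSucc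

variable {x y}

@[simp]
lemma differential_apply (n : ℕ) (f : Fin (n + 2) → R) (i : Fin (n + 1)) :
    differential x y n f i = x * f i.succ + (-1) ^ (i : ℕ) * y * f i.castSucc := rfl

lemma differential_differential (h : IsExactSquareZeroPair x y) (n : ℕ) (f : Fin (n + 3) → R) :
    differential x y n (differential x y (n + 1) f) = 0 := by
  ext i
  simp only [differential_apply, Fin.succ_castSucc, Fin.val_succ, Fin.val_castSucc, Pi.zero_apply]
  linear_combination f i.succ.succ * h.left_mul_self +
    (-1) ^ (i : ℕ) * (-1) ^ (i : ℕ) * f i.castSucc.castSucc * h.right_mul_self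

lemma exists_differential_eq (h : IsExactSquareZeroPair x y) {n : ℕ} (f : Fin (n + 1) → R)
    (h₀ : f 0 ∈ Ideal.span {x, y})
    (hf : ∀ i : Fin n, x * f i.succ + (-1) ^ (i : ℕ) * y * f i.castSucc = 0) :
    ∃ g, differential x y n g = f := by
  -- The coordinates of `g` are found in increasing horizontal degree. The cycle condition in each
  -- degree makes the equation for the next coordinate solvable.
  induction n with
  | zero =>
    obtain ⟨a, b, hab⟩ := Ideal.mem_span_pair.1 h₀
    refine ⟨![b, a], funext fun i => ?_⟩
    obtain rfl := Fin.eq_zero i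
    simp [← hab]
    ring
  | succ n ih =>
    obtain ⟨g, hg⟩ := ih (Fin.init f) h₀ fun i => by
      simpa [Fin.init] using hf i.castSucc
    have hlast : x * g (Fin.last _) + (-1) ^ n * y * g (Fin.last n).castSucc
        = f (Fin.last n).castSucc := by
      simpa [Fin.init] using congrFun hg (Fin.last n)
    have hcycle : x * f (Fin.last _) + (-1) ^ n * y * f (Fin.last n).castSucc = 0 := by
      simpa using hf (Fin.last n)
    obtain ⟨r, hr⟩ : x ∣ f (Fin.last _) + (-1) ^ n * y * g (Fin.last _) := by
      apply h.dvd_of_mul_eq_zero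
      linear_combination hcycle + (-1) ^ n * y * hlast
        - (-1) ^ n * (-1) ^ n * g (Fin.last n).castSucc * h.right_mul_self
    refine ⟨Fin.snoc g r, funext fun i => ?_⟩
    cases i using Fin.lastCases with
    | last =>
      rw [differential_apply, Fin.succ_last, Fin.snoc_last, Fin.snoc_castSucc, Fin.val_last]
      linear_combination -hr
    | cast i =>
      rw [differential_apply, Fin.succ_castSucc, Fin.snoc_castSucc, Fin.snoc_castSucc,
        Fin.val_castSucc, ← differential_apply, hg, Fin.init]

lemma exact_differential (h : IsExactSquareZeroPair x y) (n : ℕ) :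
    Function.Exact (differential x y (n + 1)) (differential x y n) := by
  intro f
  refine ⟨fun hf => ?_, ?_⟩
  · have hf' (i : Fin (n + 1)) := congrFun hf i
    refine h.exists_differential_eq f (h.mem_span_of_mul_eq_zero ?_) hf'
    have hf₀ : x * f 1 + y * f 0 = 0 := by simpa using hf' 0
    linear_combination x * hf₀ - f 1 * h.left_mul_self
  · rintro ⟨g, rfl⟩
    exact h.differential_differential n g

variable {M : ModuleCat.{u} R} {ε : R →ₗ[R] M}

lemma exact_differential_zero (h : IsExactSquareZeroPair x y)
    (hε : LinearMap.ker ε = Ideal.span {x, y}) :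
    Function.Exact (differential x y 0) (ε ∘ₗ LinearMap.proj 0) := by
  intro f
  rw [LinearMap.comp_apply, LinearMap.proj_apply, ← LinearMap.mem_ker, hε]
  refine ⟨fun hf => h.exists_differential_eq f hf fun i => i.elim0, ?_⟩
  rintro ⟨g, rfl⟩
  exact Ideal.mem_span_pair.2 ⟨g 1, g 0, by simp; ring⟩

/-- The total complex of the double complex described at `differential`. -/
noncomputable def complex (h : IsExactSquareZeroPair x y) : ChainComplex (ModuleCat.{u} R) ℕ :=
  ChainComplex.of (fun n => ModuleCat.of R (Fin (n + 1) → R))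
    (fun n => ModuleCat.ofHom (differential x y n))
    (fun n => ModuleCat.hom_ext (LinearMap.ext (h.differential_differential n)))

lemma complex_d (h : IsExactSquareZeroPair x y) (n : ℕ) :
    h.complex.d (n + 1) n = ModuleCat.ofHom (differential x y n) :=
  ChainComplex.of_d (fun n => ModuleCat.of R (Fin (n + 1) → R))
    (fun n => ModuleCat.ofHom (differential x y n)) n

lemma exactAt_complex_succ (h : IsExactSquareZeroPair x y) (n : ℕ) :
    h.complex.ExactAt (n + 1) := by
  rw [HomologicalComplex.exactAt_iff' _ (n + 2) (n + 1) n (by simp) (by simp),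
    ShortComplex.ShortExact.moduleCat_exact_iff_function_exact]
  change Function.Exact (h.complex.d (n + 2) (n + 1)) (h.complex.d (n + 1) n)
  rw [complex_d, complex_d]
  exact h.exact_differential n

/-- The total complex as a free resolution of a module `M ≅ R ⧸ (x, y)`, the isomorphism being
given as a surjection `ε : R → M` with kernel `(x, y)`. -/
noncomputable def resolution (h : IsExactSquareZeroPair x y) (hsurj : Function.Surjective ε)
    (hε : LinearMap.ker ε = Ideal.span {x, y}) : ProjectiveResolution M :=
  let π : h.complex.X 0 ⟶ M := ModuleCat.ofHom (ε ∘ₗ LinearMap.proj (0 : Fin 1))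
  have exact_zero : Function.Exact (h.complex.d 1 0) π := by
    rw [complex_d]
    exact h.exact_differential_zero hε
  have w : h.complex.d 1 0 ≫ π = 0 :=
    ModuleCat.hom_ext (LinearMap.ext exact_zero.apply_apply_eq_zero)
  have epi_π : Epi π := (ModuleCat.epi_iff_surjective _).2
    (hsurj.comp (Function.surjective_eval (0 : Fin 1)))
  { complex := h.complex
    projective n := inferInstanceAs (Projective (ModuleCat.of R (Fin (n + 1) → R)))
    π := (h.complex.toSingle₀Equiv M).symm ⟨π, w⟩
    quasiIso := quasiIso_toSingle₀Equiv_symm _ π w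
      ((ShortComplex.ShortExact.moduleCat_exact_iff_function_exact _).2 exact_zero)
      h.exactAt_complex_succ }

end IsExactSquareZeroPair

end ExactPair

section GroupAlgebra

lemma single_add_one_dvd_of_single_sub_one_mul_eq_zero {k G : Type*} [Ring k] [Group G]
    {g : G} (hg : orderOf g = 2) {r : k[G]} (h : (single g 1 - 1) * r = 0) :
    single g 1 + 1 ∣ r := by
  classical
  obtain ⟨hgg, hg1⟩ := orderOf_eq_prime_iff.1 hg
  have hginv : g⁻¹ = g := inv_eq_of_mul_eq_one_left (by rwa [← sq])
  have hinv (m : G) : r.coeff (g * m) = r.coeff m := by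
    simpa [sub_mul, sub_eq_zero, hginv] using congrArg (fun r => r.coeff m) h
  -- As `r` is constant on each pair `{m, g * m}`, it suffices to keep the smaller element of each.
  let _ : LinearOrder G := WellOrderingRel.isWellOrder.linearOrder
  refine ⟨MonoidAlgebra.ofCoeff (r.coeff.filter fun m => m < g * m), ?_⟩
  ext m
  rcases lt_or_gt_of_ne (show m ≠ g * m by simpa using hg1) with hm | hm <;>
    simp [add_mul, hginv, hinv, ← mul_assoc, ← sq, hgg, hm, hm.not_gt]

variable (k G : Type*) [CommRing k] [Group G]

/-- The augmentation of the group algebra, sending every element of the group to `1`. -/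
noncomputable abbrev augmentation : k[G] →ₐ[k] k :=
  MonoidAlgebra.lift k k G 1

variable {k G}

lemma augmentation_single (g : G) (a : k) :
    augmentation k G (single g a) = a := by
  simp

lemma augmentation_single_sub_one (g : G) :
    augmentation k G (single g 1 - 1) = 0 := by
  rw [map_sub, augmentation_single, map_one, sub_self]

lemma sub_algebraMap_augmentation_mem_span {S : Set G} (hS : Subgroup.closure S = ⊤)
    (r : k[G]) :
    r - algebraMap k k[G] (augmentation k G r) ∈
      Ideal.span ((fun g => single g (1 : k) - 1) '' S) := by
  set I := Ideal.span ((fun g => single g (1 : k) - 1) '' S)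
  have hsingle (g : G) : single g (1 : k) - 1 ∈ I := by
    induction (hS ▸ Subgroup.mem_top g : g ∈ Subgroup.closure S) using
      Subgroup.closure_induction with
    | mem g hg => exact Ideal.subset_span ⟨g, hg, rfl⟩
    | one => simp [← MonoidAlgebra.one_def]
    | mul g g' _ _ hg hg' =>
      convert add_mem (I.mul_mem_left (single g 1) hg') hg using 1
      simp [mul_sub, single_mul_single]
    | inv g _ hg =>
      convert neg_mem (I.mul_mem_left (single g⁻¹ 1) hg) using 1
      simp [mul_sub, single_mul_single, ← MonoidAlgebra.one_def]
  induction r using MonoidAlgebra.induction_on with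
  | of g => simpa [← MonoidAlgebra.one_def] using hsingle g
  | add r s hr hs =>
    convert add_mem hr hs using 1
    simp only [map_add]
    abel
  | smul a r hr =>
    convert Submodule.smul_of_tower_mem I a hr using 1
    simp only [Algebra.smul_def a r, map_mul, AlgHom.commutes, Algebra.algebraMap_self_apply,
      Algebra.smul_def a (_ - _), mul_sub]

lemma ker_augmentation {S : Set G} (hS : Subgroup.closure S = ⊤) :
    RingHom.ker (augmentation k G) =
      Ideal.span ((fun g => single g (1 : k) - 1) '' S) := by
  refine le_antisymm (fun r hr => ?_) (Ideal.span_le.2 ?_)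
  · simpa [(RingHom.mem_ker).1 hr] using sub_algebraMap_augmentation_mem_span hS r
  · rintro _ ⟨g, -, rfl⟩
    exact augmentation_single_sub_one g

end GroupAlgebra

section KleinFour

lemma exists_ne_one_ne_one_ne (G : Type*) [Group G] [IsKleinFour G] :
    ∃ s t : G, s ≠ 1 ∧ t ≠ 1 ∧ s ≠ t := by
  have : Nontrivial G :=
    not_subsingleton_iff_nontrivial.1 fun _ => IsKleinFour.not_isCyclic (G := G) inferInstance
  obtain ⟨s, hs⟩ := exists_ne (1 : G)
  obtain ⟨t, ht⟩ : ∃ t, t ∉ Subgroup.zpowers s := by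
    by_contra! h
    exact IsKleinFour.not_isCyclic ⟨s, h⟩
  refine ⟨s, t, hs, ?_, ?_⟩
  · rintro rfl
    exact ht (one_mem _)
  · rintro rfl
    exact ht (Subgroup.mem_zpowers s)

lemma closure_pair_eq_top {G : Type*} [Group G] [IsKleinFour G] {s t : G} (hs : s ≠ 1)
    (ht : t ≠ 1) (hst : s ≠ t) :
    Subgroup.closure {s, t} = ⊤ := by
  rw [eq_top_iff]
  intro g _
  have hsmem : s ∈ Subgroup.closure {s, t} := Subgroup.subset_closure (by simp)
  have htmem : t ∈ Subgroup.closure {s, t} := Subgroup.subset_closure (by simp)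
  by_cases hg : g = 1
  · exact hg ▸ one_mem _
  by_cases hgs : g = s
  · exact hgs ▸ hsmem
  by_cases hgt : g = t
  · exact hgt ▸ htmem
  exact IsKleinFour.eq_mul_of_ne_all hs ht hst hg hgs hgt ▸ mul_mem hsmem htmem

lemma coeff_one_single_sub_one_mul_single_sub_one {k G : Type*} [Ring k] [Group G] {s t : G}
    (hs : s ≠ 1) (ht : t ≠ 1) (hst : s * t ≠ 1) :
    ((single s 1 - 1 : k[G]) * (single t 1 - 1)).coeff 1 = 1 := by
  simp [sub_mul, mul_sub, single_mul_single, MonoidAlgebra.one_def, hs, ht, hst]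

variable {k G : Type*} [CommRing k] [CharP k 2]

lemma charTwo_monoidAlgebra [Group G] : CharP k[G] 2 :=
  charP_of_injective_algebraMap (FaithfulSMul.algebraMap_injective k k[G]) 2

lemma single_sub_one_mul_self [Group G] {g : G} (hg : orderOf g = 2) :
    (single g 1 - 1 : k[G]) * (single g 1 - 1) = 0 := by
  have := charTwo_monoidAlgebra (k := k) (G := G)
  have hgg : (single g 1 * single g 1 : k[G]) = 1 := by
    rw [single_mul_single, ← sq, orderOf_dvd_iff_pow_eq_one.1 hg.dvd, mul_one,
      MonoidAlgebra.one_def]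
  rw [sub_mul, mul_sub, hgg, mul_one, one_mul, CharTwo.sub_eq_add (1 - _), sub_add_sub_cancel,
    sub_self]

lemma single_sub_one_mul_single_sub_one_mul [CommGroup G] {s t : G} (hs : orderOf s = 2)
    (ht : orderOf t = 2) (hgen : Subgroup.closure {s, t} = ⊤) (r : k[G]) :
    (single s 1 - 1) * (single t 1 - 1) * r =
      augmentation k G r • ((single s 1 - 1) * (single t 1 - 1)) := by
  have hr := sub_algebraMap_augmentation_mem_span (k := k) hgen r
  rw [Set.image_pair] at hr
  obtain ⟨a, b, hab⟩ := Ideal.mem_span_pair.1 hr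
  have hss := single_sub_one_mul_self (k := k) hs
  have htt := single_sub_one_mul_self (k := k) ht
  rw [Algebra.smul_def]
  set x : k[G] := single s 1 - 1
  set y : k[G] := single t 1 - 1
  linear_combination -x * y * hab + a * y * hss + b * x * htt

lemma isExactSquareZeroPair_single_sub_one [CommGroup G] {s t : G} (hs : orderOf s = 2)
    (ht : orderOf t = 2) (hst : s ≠ t) (hgen : Subgroup.closure {s, t} = ⊤) :
    IsExactSquareZeroPair (single s 1 - 1 : k[G])
      (single t 1 - 1) where
  left_mul_self := single_sub_one_mul_self hs
  right_mul_self := single_sub_one_mul_self ht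
  dvd_of_mul_eq_zero h := by
    have := charTwo_monoidAlgebra (k := k) (G := G)
    rw [CharTwo.sub_eq_add]
    exact single_add_one_dvd_of_single_sub_one_mul_eq_zero hs h
  mem_span_of_mul_eq_zero {r} h := by
    obtain ⟨-, hs₁⟩ := orderOf_eq_prime_iff.1 hs
    obtain ⟨htt, ht₁⟩ := orderOf_eq_prime_iff.1 ht
    have hst₁ : s * t ≠ 1 := by
      rwa [Ne, mul_eq_one_iff_eq_inv, inv_eq_of_mul_eq_one_left (by rwa [← sq])]
    rw [single_sub_one_mul_single_sub_one_mul hs ht hgen] at h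
    have haug : augmentation k G r = 0 := by
      have hcoeff := congrArg (fun r => r.coeff 1) h
      simpa [coeff_one_single_sub_one_mul_single_sub_one, hs₁, ht₁, hst₁] using hcoeff
    simpa [haug, Set.image_pair] using sub_algebraMap_augmentation_mem_span (k := k) hgen r

end KleinFour

section Coinvariants

variable (k : Type) [CommRing k] (G : Type) [Group G]

/-- The ring `k` as a `k[G]`-module on which `G` acts trivially. -/
noncomputable def trivialModule : ModuleCat k[G] :=
  letI : Module k[G] k := Module.compHom k (augmentation k G).toRingHom
  ModuleCat.of k[G] k

/-- The augmentation as a `k[G]`-linear map to the trivial module. -/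
noncomputable def augmentationToTrivial : k[G] →ₗ[k[G]] trivialModule k G where
  toFun := augmentation k G
  map_add' := map_add (augmentation k G)
  map_smul' := map_mul (augmentation k G)

lemma augmentationToTrivial_surjective : Function.Surjective (augmentationToTrivial k G) :=
  fun a => ⟨algebraMap k _ a, (augmentation k G).commutes a⟩

lemma ker_augmentationToTrivial :
    LinearMap.ker (augmentationToTrivial k G) = RingHom.ker (augmentation k G) := rfl

/-- The pairs `(g, 1)`, so that `relSub` identifies `g • v` with `v`. -/
abbrev coinvariantRelations : Set (k[G] × k[G]) :=
  {p | ∃ g : G, p = (single g 1, 1)}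

/-- The functor of `G`-coinvariants. -/
noncomputable abbrev coinvariants : ModuleCat k[G] ⥤ ModuleCat k :=
  coinvFunctor k k[G] (coinvariantRelations k G)

variable {k G}

lemma smul_sub_augmentation_smul_mem_relSub (N : ModuleCat k[G]) (r : k[G]) (v : N) :
    (r • v - algebraMap k k[G] (augmentation k G r) • v : N) ∈
      relSub k k[G] (coinvariantRelations k G) N := by
  induction r using MonoidAlgebra.induction_on with
  | of g =>
    refine Submodule.subset_span ⟨_, ⟨g, rfl⟩, v, ?_⟩
    rw [MonoidAlgebra.of_apply, augmentation_single, map_one, one_smul]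
  | add r s hr hs =>
    convert! add_mem hr hs using 1
    simp only [map_add, add_smul]
    abel
  | smul a r hr =>
    convert! Submodule.smul_mem _ a hr using 1
    change _ = algebraMap k k[G] a • (_ : N)
    simp only [Algebra.smul_def a r, map_mul, AlgHom.commutes, Algebra.algebraMap_self_apply,
      mul_smul, smul_sub]

lemma smul_mem_relSub_of_augmentation_eq_zero {r : k[G]}
    (hr : augmentation k G r = 0) (N : ModuleCat k[G]) (v : N) :
    (r • v : N) ∈ relSub k k[G] (coinvariantRelations k G) N := by
  simpa [hr] using smul_sub_augmentation_smul_mem_relSub N r v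

variable (k G) (ι : Type)

/-- The augmentation applied to each coordinate of a power of `k[G]`. -/
noncomputable def piAugmentation :
    (ModuleCat.restrictScalars (algebraMap k k[G])).obj
      (ModuleCat.of k[G] (ι → k[G])) →ₗ[k] (ι → k) where
  toFun (f : ι → k[G]) i := augmentation k G (f i)
  map_add' (f g : ι → k[G]) := funext fun i => map_add (augmentation k G) (f i) (g i)
  map_smul' a (f : ι → k[G]) := funext fun i => by
    change augmentation k G (algebraMap k _ a * f i) = a * augmentation k G (f i)
    rw [map_mul, AlgHom.commutes]
    rfl

lemma piAugmentation_surjective : Function.Surjective (piAugmentation k G ι) :=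
  fun a => ⟨(fun i => algebraMap k _ (a i) : ι → k[G]),
    funext fun i => (augmentation k G).commutes (a i)⟩

lemma ker_piAugmentation [Finite ι] :
    LinearMap.ker (piAugmentation k G ι) =
      relSub k k[G] (coinvariantRelations k G) (ModuleCat.of k[G] (ι → k[G])) := by
  classical
  cases nonempty_fintype ι
  refine le_antisymm (fun (f : ι → k[G]) hf => ?_) (Submodule.span_le.2 ?_)
  · have hf₀ (i : ι) : augmentation k G (f i) = 0 := congrFun hf i
    have hmem := sum_mem (t := Finset.univ) fun i _ =>
      smul_mem_relSub_of_augmentation_eq_zero (hf₀ i)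
        (ModuleCat.of k[G] (ι → k[G])) (Pi.single i 1)
    rwa [← pi_eq_sum_univ' f] at hmem
  · rintro _ ⟨_, ⟨g, rfl⟩, (f : ι → k[G]), rfl⟩
    refine LinearMap.mem_ker.2 (funext fun i => ?_)
    change augmentation k G (single g 1 * f i - 1 * f i) = 0
    simp

/-- The coinvariants of a free module of finite rank, computed by the augmentation. -/
noncomputable def coinvariantsPiEquiv [Finite ι] :
    (coinvariants k G).obj (ModuleCat.of k[G] (ι → k[G])) ≃ₗ[k] (ι → k) :=
  (Submodule.quotEquivOfEq _ _ (ker_piAugmentation k G ι).symm).trans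
    ((piAugmentation k G ι).quotKerEquivOfSurjective (piAugmentation_surjective k G ι))

lemma coinvariants_map_complex_d {k G : Type} [CommRing k] [CommGroup G] {x y : k[G]}
    (h : IsExactSquareZeroPair x y) (hx : augmentation k G x = 0) (hy : augmentation k G y = 0)
    (i j : ℕ) : (coinvariants k G).map (h.complex.d i j) = 0 := by
  by_cases hij : j + 1 = i
  · subst hij
    rw [h.complex_d]
    refine ModuleCat.hom_ext (Submodule.linearMap_qext _ (LinearMap.ext
      fun (f : Fin (j + 2) → k[G]) => (Submodule.Quotient.mk_eq_zero _).2 ?_))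
    have hxmem := smul_mem_relSub_of_augmentation_eq_zero hx
      (ModuleCat.of k[G] (Fin (j + 1) → k[G])) (fun i => f i.succ)
    have hymem := smul_mem_relSub_of_augmentation_eq_zero hy
      (ModuleCat.of k[G] (Fin (j + 1) → k[G])) (fun i => (-1) ^ (i : ℕ) * f i.castSucc)
    convert! add_mem hxmem hymem using 1
    funext i
    change x * f i.succ + (-1) ^ (i : ℕ) * y * f i.castSucc =
      x * f i.succ + y * ((-1) ^ (i : ℕ) * f i.castSucc)
    ring
  · rw [h.complex.shape _ _ hij, Functor.map_zero]

end Coinvariants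

theorem groupHomology_kleinFour_general (k : Type) [CommRing k] [CharP k 2] (G : Type) [Group G]
    [IsKleinFour G] (n : ℕ) : Module.finrank k (GroupHomology k G n) = n + 1 := by
  have : Nontrivial k := CharP.nontrivial_of_char_ne_one (v := 2) (by decide)
  let _ : CommGroup G :=
    { ‹Group G› with mul_comm := mul_comm_of_exponent_two IsKleinFour.exponent_two }
  obtain ⟨s, t, hs, ht, hst⟩ := exists_ne_one_ne_one_ne G
  have hgen := closure_pair_eq_top hs ht hst
  have hpair := isExactSquareZeroPair_single_sub_one (k := k)
    ((orderOf_eq_two_iff IsKleinFour.exponent_two).2 hs)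
    ((orderOf_eq_two_iff IsKleinFour.exponent_two).2 ht) hst hgen
  have hker : LinearMap.ker (augmentationToTrivial k G) =
      Ideal.span {single s 1 - 1, single t 1 - 1} := by
    rw [ker_augmentationToTrivial, ker_augmentation hgen, Set.image_pair]
  let P := hpair.resolution (augmentationToTrivial_surjective k G) hker
  let e : GroupHomology k G n ≃ₗ[k] (Fin (n + 1) → k) :=
    (leftDerivedObjIsoOfMapDEqZero P (coinvariants k G)
      (coinvariants_map_complex_d hpair (augmentation_single_sub_one s)
        (augmentation_single_sub_one t)) n).toLinearEquiv ≪≫ₗ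
      coinvariantsPiEquiv k G (Fin (n + 1))
  rw [e.finrank_eq, Module.finrank_fin_fun]

/-- The group homology of the Klein four-group `C₂ × C₂` with trivial coefficients `F₂` is an
`F₂`-vector space of dimension `n + 1` in degree `n`. -/
theorem groupHomology_kleinFour (n : ℕ) :
    Module.finrank (ZMod 2)
      (GroupHomology (ZMod 2) (Multiplicative (ZMod 2) × Multiplicative (ZMod 2)) n)
      = n + 1 := by
  have : IsKleinFour (Multiplicative (ZMod 2) × Multiplicative (ZMod 2)) :=
    ⟨by simp, by simp [Monoid.exponent_prod]⟩
  exact groupHomology_kleinFour_general (ZMod 2) _ n
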